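/- Let p ∈ I and S' ⊊ J with |S'∪S_{p−1}| ≤ n − l < |S'∪S_p|, and assume p < m or |S_m| < n − l. If S' ∩ S_p = ∅, |S'| ≤ n − l − 1, and S_{p+1}∖S_p is not a subset of S' whenever p ≤ m − 1, then the mixing inequality Mix≥(S',p) defines a facet of conv(X^{l,u}). -/

import Mathlib

open Finset

noncomputable section

def Xset (n m l u : ℕ) (S : Fin m → Finset (Fin n)) : Set ((Fin n → ℝ) × (Fin m → ℝ)) :=
  {zd | (∀ j, zd.1 j = 0 ∨ zd.1 j = 1) ∧ (∀ i, zd.2 i = 0 ∨ zd.2 i = 1) ∧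
        (∀ i, zd.2 i = ∏ j ∈ S i, (1 - zd.1 j)) ∧
        (l : ℝ) ≤ ∑ j, zd.1 j ∧ ∑ j, zd.1 j ≤ (u : ℝ)}

def Dset (n m l u : ℕ) (S : Fin m → Finset (Fin n)) : Set (Fin m → ℝ) :=
  Prod.snd '' Xset n m l u S

def Xfiber (n m l u : ℕ) (S : Fin m → Finset (Fin n)) (δ : Fin m → ℝ) :
    Set (Fin n → ℝ) :=
  {z | (z, δ) ∈ Xset n m l u S}

/-- The family is closed under nonempty intersection. -/
def ClosedInter (n m : ℕ) (S : Fin m → Finset (Fin n)) : Prop :=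
  ∀ i j : Fin m, (S i ∩ S j).Nonempty → ∃ k, S i ∩ S j = S k

/-- The family is proper. -/
def ProperFam (n m l u : ℕ) (S : Fin m → Finset (Fin n)) : Prop :=
  ClosedInter n m S ∧
  ∃ D : Finset (Fin m → ℝ), (D : Set (Fin m → ℝ)) = Dset n m l u S ∧ D.card = m + 1 ∧
    AffineIndependent ℝ (Subtype.val : {x : Fin m → ℝ // x ∈ D} → (Fin m → ℝ))

/-- `f x ≤ c` is valid and defines a facet of `conv P`. -/
def IsFacet {E : Type*} [AddCommGroup E] [Module ℝ E] (P : Set E) (f : E → ℝ) (c : ℝ) :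
    Prop :=
  (∀ x ∈ P, f x ≤ c) ∧
  Module.finrank ℝ (affineSpan ℝ {x ∈ convexHull ℝ P | f x = c}).direction + 1 =
    Module.finrank ℝ (affineSpan ℝ P).direction

def SS (n m : ℕ) (S : Fin m → Finset (Fin n)) : ℕ → Finset (Fin n) :=
  fun k => if h : 1 ≤ k ∧ k ≤ m then S ⟨k - 1, by omega⟩ else if k = 0 then ∅ else Finset.univ

def dd (m : ℕ) (δ : Fin m → ℝ) : ℕ → ℝ :=
  fun k => if h : 1 ≤ k ∧ k ≤ m then δ ⟨k - 1, by omega⟩ else if k = 0 then 1 else 0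

def mixLeLHS (n m u : ℕ) (S : Fin m → Finset (Fin n)) (p : ℕ) (S' : Finset (Fin n))
    (zd : (Fin n → ℝ) × (Fin m → ℝ)) : ℝ :=
  ∑ j ∈ S', zd.1 j + ((u : ℝ) - ((S' \ SS n m S p).card : ℝ)) * dd m zd.2 p
    + ∑ i ∈ Finset.Icc (p + 1) m,
        (((S' \ SS n m S (i - 1)).card : ℝ) - ((S' \ SS n m S i).card : ℝ)) * dd m zd.2 i

def MixLe (n m u : ℕ) (S : Fin m → Finset (Fin n)) (p : ℕ) (S' : Finset (Fin n))
    (zd : (Fin n → ℝ) × (Fin m → ℝ)) : Prop :=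
  mixLeLHS n m u S p S' zd ≤ (u : ℝ)

def mixGeLHS (n m l : ℕ) (S : Fin m → Finset (Fin n)) (p : ℕ) (S' : Finset (Fin n))
    (zd : (Fin n → ℝ) × (Fin m → ℝ)) : ℝ :=
  (((S' ∪ SS n m S p).card : ℝ) - (n : ℝ) + (l : ℝ)) * dd m zd.2 p
    + ∑ i ∈ Finset.Icc (p + 1) m,
        (((S' ∪ SS n m S i).card : ℝ) - ((S' ∪ SS n m S (i - 1)).card : ℝ)) * dd m zd.2 i
    - ∑ j ∈ S', zd.1 j

def MixGe (n m l : ℕ) (S : Fin m → Finset (Fin n)) (p : ℕ) (S' : Finset (Fin n))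
    (zd : (Fin n → ℝ) × (Fin m → ℝ)) : Prop :=
  mixGeLHS n m l S p S' zd ≤ 0

def NestedLin (n m l u : ℕ) (S : Fin m → Finset (Fin n))
    (zd : (Fin n → ℝ) × (Fin m → ℝ)) : Prop :=
  ((l : ℝ) ≤ ∑ j, zd.1 j) ∧ (∑ j, zd.1 j ≤ (u : ℝ)) ∧
  (∀ i : Fin m, ∀ j ∈ S i, zd.1 j + zd.2 i ≤ 1) ∧
  (1 ≤ dd m zd.2 1 + ∑ j ∈ SS n m S 1, zd.1 j) ∧
  (0 ≤ dd m zd.2 m) ∧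
  (∀ j, 0 ≤ zd.1 j) ∧
  (∀ j, j ∉ SS n m S m → zd.1 j ≤ 1) ∧
  (∀ i : ℕ, 1 ≤ i → i + 1 ≤ m → dd m zd.2 (i + 1) ≤ dd m zd.2 i) ∧
  (∀ i : ℕ, 1 ≤ i → i + 1 ≤ m →
    dd m zd.2 i - dd m zd.2 (i + 1) ≤ ∑ j ∈ SS n m S (i + 1) \ SS n m S i, zd.1 j)

def FollowsPattern (n : ℕ) (α α' : Fin n → ℝ) : Prop :=
  (∀ j, (0 ≤ α j → 0 ≤ α' j) ∧ (α j ≤ 0 → α' j ≤ 0)) ∧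
  (∀ j₁ j₂ : Fin n, α j₂ ≤ α j₁ → α' j₂ ≤ α' j₁)

def IsFacetSet {E : Type*} [AddCommGroup E] [Module ℝ E] (P : Set E) (F : Set E) : Prop :=
  ∃ (f : E →ₗ[ℝ] ℝ) (c : ℝ), (∀ x ∈ P, f x ≤ c) ∧
    F = {x ∈ convexHull ℝ P | f x = c} ∧
    Module.finrank ℝ (affineSpan ℝ F).direction + 1 =
      Module.finrank ℝ (affineSpan ℝ P).direction


def ptZ (n m : ℕ) (S : Fin m → Finset (Fin n)) (Z : Finset (Fin n)) :
    (Fin n → ℝ) × (Fin m → ℝ) :=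
  (fun j => if j ∈ Z then 1 else 0, fun i => if Disjoint (S i) Z then 1 else 0)

def Lev (n m : ℕ) (S : Fin m → Finset (Fin n)) (Z : Finset (Fin n)) (k : ℕ) : Prop :=
  ∀ i : ℕ, i ≤ m → (Disjoint (SS n m S i) Z ↔ i ≤ k)

lemma SS_fin (n m : ℕ) (S : Fin m → Finset (Fin n)) (i : Fin m) :
    SS n m S (i + 1) = S i := by
  have := i.2
  simp [SS]

lemma SS_mono (n m : ℕ) (S : Fin m → Finset (Fin n))
    (hnested : ∀ i j : Fin m, i < j → S i ⊂ S j) {i j : ℕ} (hij : i ≤ j) :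
    SS n m S i ⊆ SS n m S j := by
  rcases hij.eq_or_lt with rfl | hlt
  · exact subset_rfl
  unfold SS
  by_cases hi : 1 ≤ i ∧ i ≤ m
  · by_cases hj : 1 ≤ j ∧ j ≤ m
    · rw [dif_pos hi, dif_pos hj]
      exact (hnested _ _ (by simp only [Fin.mk_lt_mk]; omega)).subset
    · rw [dif_neg hj, if_neg (by omega : ¬ j = 0)]; exact Finset.subset_univ _
  · rw [dif_neg hi]
    by_cases h0 : i = 0
    · rw [if_pos h0]; exact empty_subset _
    · have hj : ¬ (1 ≤ j ∧ j ≤ m) := by omega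
      rw [dif_neg hj, if_neg (by omega : ¬ j = 0)]; exact Finset.subset_univ _

lemma dd_pt (n m : ℕ) (S : Fin m → Finset (Fin n)) (Z : Finset (Fin n)) (i : ℕ)
    (h1 : 1 ≤ i) (h2 : i ≤ m) :
    dd m (ptZ n m S Z).2 i = if Disjoint (SS n m S i) Z then 1 else 0 := by
  simp [dd, SS, ptZ, h1, h2]

lemma pt_mem (n m l u : ℕ) (S : Fin m → Finset (Fin n)) (Z : Finset (Fin n))
    (h1 : l ≤ Z.card) (h2 : Z.card ≤ u) : ptZ n m S Z ∈ Xset n m l u S := by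
  refine ⟨?_, ?_, ?_, ?_, ?_⟩
  · intro j; simp only [ptZ]; split_ifs <;> simp
  · intro j; simp only [ptZ]; split_ifs <;> simp
  · intro i
    simp only [ptZ]
    split_ifs with h
    · rw [Finset.prod_eq_one]
      intro j hj
      rw [if_neg (Finset.disjoint_left.mp h hj)]; simp
    · rw [Finset.not_disjoint_iff] at h
      obtain ⟨j, hj, hj'⟩ := h
      rw [Finset.prod_eq_zero hj]; simp [hj']
  · simp [ptZ]; exact_mod_cast h1
  · simp [ptZ]; exact_mod_cast h2

lemma mem_pt (n m l u : ℕ) (S : Fin m → Finset (Fin n)) (x : (Fin n → ℝ) × (Fin m → ℝ))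
    (hx : x ∈ Xset n m l u S) : ∃ Z : Finset (Fin n), l ≤ Z.card ∧ Z.card ≤ u ∧
      x = ptZ n m S Z := by
  classical
  obtain ⟨a, b, c, d, e⟩ := hx
  let Z : Finset (Fin n) := univ.filter (fun j => x.1 j = 1)
  have hz : ∀ j, x.1 j = if j ∈ Z then 1 else 0 := by
    intro j
    rcases a j with h | h <;> simp [Z, h]
  have hs : ∑ j, x.1 j = Z.card := by
    rw [Finset.sum_congr rfl (fun j _ => hz j)]; simp
  rw [hs] at d e
  have d' : l ≤ Z.card := by exact_mod_cast d
  have e' : Z.card ≤ u := by exact_mod_cast e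
  refine ⟨Z, d', e', ?_⟩
  have hfst : x.1 = (ptZ n m S Z).1 := by
    funext j; rw [hz j]; rfl
  have := pt_mem n m l u S Z d' e'
  refine Prod.ext hfst ?_
  funext i
  rw [c i, this.2.2.1 i, hfst]

lemma tele (g : ℕ → ℝ) (p m k : ℕ) (hpk : p ≤ k) (hkm : k ≤ m) :
    ∑ i ∈ Icc (p + 1) m, (g i - g (i - 1)) * (if i ≤ k then (1:ℝ) else 0) = g k - g p := by
  have h1 : ∑ i ∈ Icc (p + 1) m, (g i - g (i - 1)) * (if i ≤ k then (1:ℝ) else 0)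
      = ∑ i ∈ Icc (p + 1) k, (g i - g (i - 1)) := by
    rw [← Finset.sum_subset (Finset.Icc_subset_Icc_right hkm)]
    · apply Finset.sum_congr rfl
      intro i hi
      rw [Finset.mem_Icc] at hi
      rw [if_pos hi.2, mul_one]
    · intro i hi hi'
      rw [Finset.mem_Icc] at hi hi'
      rw [if_neg (by omega), mul_zero]
  rw [h1]
  clear h1 hkm
  induction k, hpk using Nat.le_induction with
  | base => simp
  | succ k hk ih =>
    rw [Finset.sum_Icc_succ_top (by omega), ih]; simp

lemma F_val (n m l : ℕ) (S : Fin m → Finset (Fin n)) (p : ℕ) (hp1 : 1 ≤ p) (hpm : p ≤ m)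
    (S' Z : Finset (Fin n)) (k : ℕ) (hk : k ≤ m) (hpk : p ≤ k) (hL : Lev n m S Z k) :
    mixGeLHS n m l S p S' (ptZ n m S Z) =
      ((S' ∪ SS n m S k).card : ℝ) - n + l - ((S' ∩ Z).card : ℝ) := by
  unfold mixGeLHS
  have e1 : dd m (ptZ n m S Z).2 p = 1 := by
    rw [dd_pt _ _ _ _ _ hp1 hpm, if_pos ((hL p hpm).2 hpk)]
  have e2 := tele (fun i => ((S' ∪ SS n m S i).card : ℝ)) p m k hpk hk
  have e3 : ∑ i ∈ Icc (p + 1) m, (((S' ∪ SS n m S i).card : ℝ) -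
      ((S' ∪ SS n m S (i - 1)).card : ℝ)) * dd m (ptZ n m S Z).2 i =
      ((S' ∪ SS n m S k).card : ℝ) - ((S' ∪ SS n m S p).card : ℝ) := by
    rw [← e2]
    apply Finset.sum_congr rfl
    intro i hi
    rw [Finset.mem_Icc] at hi
    rw [dd_pt _ _ _ _ _ (by omega) hi.2]
    simp only [hL i hi.2]
  rw [e1, e3]
  have e4 : ∑ j ∈ S', (ptZ n m S Z).1 j = ((S' ∩ Z).card : ℝ) := by
    simp [ptZ]
  rw [e4]; ring

lemma F_val0 (n m l : ℕ) (S : Fin m → Finset (Fin n))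
    (hnested : ∀ i j : Fin m, i < j → S i ⊂ S j) (p : ℕ) (hp1 : 1 ≤ p) (hpm : p ≤ m)
    (S' Z : Finset (Fin n)) (hL : ¬ Disjoint (SS n m S p) Z) :
    mixGeLHS n m l S p S' (ptZ n m S Z) = - ((S' ∩ Z).card : ℝ) := by
  unfold mixGeLHS
  have e1 : dd m (ptZ n m S Z).2 p = 0 := by
    rw [dd_pt _ _ _ _ _ hp1 hpm, if_neg hL]
  have e3 : ∑ i ∈ Icc (p + 1) m, (((S' ∪ SS n m S i).card : ℝ) -
      ((S' ∪ SS n m S (i - 1)).card : ℝ)) * dd m (ptZ n m S Z).2 i = 0 := by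
    apply Finset.sum_eq_zero
    intro i hi
    rw [Finset.mem_Icc] at hi
    rw [dd_pt _ _ _ _ _ (by omega) hi.2, if_neg, mul_zero]
    intro h
    exact hL (h.mono_left (SS_mono n m S hnested (by omega)))
  rw [e1, e3]
  have e4 : ∑ j ∈ S', (ptZ n m S Z).1 j = ((S' ∩ Z).card : ℝ) := by
    simp [ptZ]
  rw [e4]; ring

lemma lev_of (n m : ℕ) (S : Fin m → Finset (Fin n))
    (hnested : ∀ i j : Fin m, i < j → S i ⊂ S j) (Z : Finset (Fin n)) (k : ℕ)
    (h1 : Disjoint (SS n m S k) Z) (h2 : ¬ Disjoint (SS n m S (k+1)) Z) : Lev n m S Z k := by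
  intro i _
  constructor
  · intro h
    by_contra hc
    exact h2 (h.mono_left (SS_mono n m S hnested (by omega)))
  · intro h
    exact h1.mono_left (SS_mono n m S hnested h)

lemma exists_lev (n m : ℕ) (S : Fin m → Finset (Fin n))
    (hnested : ∀ i j : Fin m, i < j → S i ⊂ S j) (Z : Finset (Fin n)) :
    ∃ k ≤ m, Lev n m S Z k := by
  classical
  let k := Nat.findGreatest (fun k => Disjoint (SS n m S k) Z) m
  refine ⟨k, Nat.findGreatest_le _, ?_⟩
  intro i hi
  constructor
  · intro h; exact Nat.le_findGreatest hi h
  · intro h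
    have : Disjoint (SS n m S k) Z :=
      Nat.findGreatest_spec (P := fun k => Disjoint (SS n m S k) Z) (m := 0) (Nat.zero_le m)
        (by simp [SS])
    exact this.mono_left (SS_mono n m S hnested h)

lemma snd_lev (n m : ℕ) (S : Fin m → Finset (Fin n)) (Z : Finset (Fin n)) (k : ℕ)
    (h : Lev n m S Z k) (i : Fin m) :
    (ptZ n m S Z).2 i = if (i : ℕ) + 1 ≤ k then 1 else 0 := by
  have := h (i+1) i.2
  rw [SS_fin] at this
  simp only [ptZ, this]

lemma F_lin (n m l : ℕ) (S : Fin m → Finset (Fin n)) (p : ℕ) (hp1 : 1 ≤ p)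
    (S' : Finset (Fin n)) : IsLinearMap ℝ (mixGeLHS n m l S p S') := by
  have ha : ∀ (x y : Fin m → ℝ) (i : ℕ), 1 ≤ i → dd m (x + y) i = dd m x i + dd m y i := by
    intro x y i hi
    have : i ≠ 0 := by omega
    unfold dd; split_ifs <;> simp
  have hb : ∀ (c : ℝ) (y : Fin m → ℝ) (i : ℕ), 1 ≤ i → dd m (c • y) i = c * dd m y i := by
    intro x y i hi
    have : i ≠ 0 := by omega
    unfold dd; split_ifs <;> simp
  constructor
  · intro x y
    unfold mixGeLHS
    rw [Prod.snd_add, ha _ _ _ hp1]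
    rw [Finset.sum_congr rfl (g := fun i => (((S' ∪ SS n m S i).card : ℝ) -
      ((S' ∪ SS n m S (i - 1)).card : ℝ)) * dd m x.2 i + (((S' ∪ SS n m S i).card : ℝ) -
      ((S' ∪ SS n m S (i - 1)).card : ℝ)) * dd m y.2 i)]
    · simp only [Finset.sum_add_distrib, Prod.fst_add, Pi.add_apply]
      ring
    · intro i hi
      rw [Finset.mem_Icc] at hi
      rw [ha _ _ _ (by omega)]; ring
  · intro c x
    unfold mixGeLHS
    rw [Prod.smul_snd, hb _ _ _ hp1]
    rw [Finset.sum_congr rfl (g := fun i => c * ((((S' ∪ SS n m S i).card : ℝ) -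
      ((S' ∪ SS n m S (i - 1)).card : ℝ)) * dd m x.2 i))]
    · simp only [← Finset.mul_sum, Prod.smul_fst, Pi.smul_apply, smul_eq_mul]
      ring
    · intro i hi
      rw [Finset.mem_Icc] at hi
      rw [hb _ _ _ (by omega)]; ring

/-- abstract facet criterion -/
lemma facet_crit {E : Type*} [AddCommGroup E] [Module ℝ E] [FiniteDimensional ℝ E] (P : Set E)
    (F : E →ₗ[ℝ] ℝ) (hval : ∀ x ∈ P, F x ≤ 0) (x0 : E) (hx0 : x0 ∈ P) (hx0' : F x0 < 0)
    (x1 : E) (hx1 : x1 ∈ P) (hx1' : F x1 = 0)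
    (hG : ∀ φ : E →ₗ[ℝ] ℝ, (∀ x ∈ P, ∀ y ∈ P, F x = 0 → F y = 0 → φ x = φ y) →
      ∃ t : ℝ, φ = t • F) : IsFacet P F 0 := by
  refine ⟨hval, ?_⟩
  set D := (affineSpan ℝ {x ∈ convexHull ℝ P | F x = 0}).direction with hD
  have hle : D ≤ LinearMap.ker F := by
    rw [hD, direction_affineSpan, vectorSpan_def, Submodule.span_le]
    rintro _ ⟨x, hx, y, hy, rfl⟩
    simp [hx.2, hy.2]
  have hDk : D = LinearMap.ker F := by
    apply le_antisymm hle
    intro v hv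
    by_contra hvD
    obtain ⟨φ, h1, h2⟩ := Submodule.exists_le_ker_of_notMem hvD
    obtain ⟨t, ht⟩ := hG φ (by
      intro x hx y hy hFx hFy
      have : x - y ∈ D := by
        rw [hD, direction_affineSpan]
        exact vsub_mem_vectorSpan ℝ ⟨subset_convexHull ℝ P hx, hFx⟩
          ⟨subset_convexHull ℝ P hy, hFy⟩
      have := h2 this
      rw [LinearMap.mem_ker, map_sub, sub_eq_zero] at this
      exact this)
    apply h1
    rw [ht, LinearMap.smul_apply, LinearMap.mem_ker.mp hv, smul_zero]
  have hF : F ≠ 0 := by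
    rintro rfl; simp at hx0'
  have htop : (affineSpan ℝ P).direction = ⊤ := by
    rw [eq_top_iff]
    intro v _
    have hv0 : x0 - x1 ∈ (affineSpan ℝ P).direction := by
      rw [direction_affineSpan]; exact vsub_mem_vectorSpan ℝ hx0 hx1
    have hsub : D ≤ (affineSpan ℝ P).direction := by
      rw [hD]
      apply AffineSubspace.direction_le
      rw [← affineSpan_convexHull (𝕜 := ℝ) P]
      exact affineSpan_mono ℝ (fun x hx => hx.1)
    have hk : v - (F v / F x0) • (x0 - x1) ∈ D := by
      rw [hDk, LinearMap.mem_ker]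
      simp [hx1']
      field_simp [hx0'.ne]
      ring
    have := Submodule.add_mem _ (hsub hk) (Submodule.smul_mem _ (F v / F x0) hv0)
    simpa using this
  rw [hDk, htop, finrank_top]
  exact Module.Dual.finrank_ker_add_one_of_ne_zero hF

theorem stmt17 (n m l u : ℕ) (S : Fin m → Finset (Fin n))
    (hn : 0 < n) (hm : 0 < m) (hu : 2 ≤ u) (hlu : l < u)
    (hnested : ∀ i j : Fin m, i < j → S i ⊂ S j)
    (hS1 : 2 ≤ (SS n m S 1).card)
    (hSm : l ≤ n - (SS n m S m).card)
    (p : ℕ) (hp1 : 1 ≤ p) (hpm : p ≤ m)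
    (S' : Finset (Fin n)) (hS'ne : S' ≠ Finset.univ)
    (h1 : (S' ∪ SS n m S (p - 1)).card ≤ n - l)
    (h2 : n - l < (S' ∪ SS n m S p).card)
    (hside : p < m ∨ (SS n m S m).card < n - l)
    (hL1 : S' ∩ SS n m S p = ∅)
    (hL2 : S'.card ≤ n - l - 1)
    (hL3 : p < m → ¬ (SS n m S (p + 1) \ SS n m S p ⊆ S')) :
    IsFacet (Xset n m l u S) (mixGeLHS n m l S p S') 0 := by
  classical
  set F : ((Fin n → ℝ) × (Fin m → ℝ)) →ₗ[ℝ] ℝ := IsLinearMap.mk' _ (F_lin n m l S p hp1 S')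
    with hFdef
  have hFap : ∀ x, F x = mixGeLHS n m l S p S' x := fun x => rfl
  have mono : ∀ {i j : ℕ}, i ≤ j → SS n m S i ⊆ SS n m S j :=
    fun h => SS_mono n m S hnested h
  -- cardinalities
  have c1m : (SS n m S 1).card ≤ (SS n m S m).card := card_le_card (mono hm)
  have cmn : (SS n m S m).card ≤ n := by
    simpa using card_le_univ (SS n m S m)
  have cun : (S' ∪ SS n m S p).card ≤ n := by
    simpa using card_le_univ (S' ∪ SS n m S p)
  have hl1 : 1 ≤ l := by omega
  have cpm : (SS n m S p).card ≤ (SS n m S m).card := card_le_card (mono hpm)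
  have hdis : Disjoint S' (SS n m S p) := Finset.disjoint_iff_inter_eq_empty.mpr hL1
  have hS'pos : 0 < S'.card := by
    have := card_union_le S' (SS n m S p)
    omega
  obtain ⟨j0, hj0⟩ := Finset.card_pos.mp hS'pos
  have step : ∀ k ≤ m, ∃ x, x ∈ SS n m S (k + 1) ∧ x ∉ SS n m S k := by
    intro k hk
    rw [← Finset.not_subset]
    intro hsub
    rcases Nat.eq_zero_or_pos k with rfl | hk0
    · have := card_le_card hsub
      have h0 : SS n m S 0 = ∅ := by simp [SS]
      rw [h0] at this
      simp at this
      simp [this] at hS1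
    rcases hk.eq_or_lt with hkm | hlt
    · have : SS n m S (k + 1) = univ := by simp [SS, hkm]
      rw [this, hkm] at hsub
      have := card_le_card hsub
      simp at this
      omega
    · have e1 := SS_fin n m S ⟨k, hlt⟩
      have e2 := SS_fin n m S ⟨k - 1, by omega⟩
      simp only at e1 e2
      rw [Nat.sub_add_cancel hk0] at e2
      rw [e1, e2] at hsub
      exact (hnested ⟨k - 1, by omega⟩ ⟨k, hlt⟩ (by simp only [Fin.mk_lt_mk]; omega)).not_subset hsub
  have cpl : (SS n m S p).card < n - l := by
    rcases hside with h | h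
    · obtain ⟨x, hx1, hx2⟩ := step p hpm
      have : SS n m S p ⊂ SS n m S (p+1) :=
        (Finset.ssubset_iff_of_subset (mono (Nat.le_succ p))).mpr ⟨x, hx1, hx2⟩
      have := card_lt_card this
      have := card_le_card (mono (i := p+1) (j := m) h)
      omega
    · omega
  -- face lemmas
  have faceA : ∀ Z : Finset (Fin n), Disjoint S' Z → ¬ Disjoint (SS n m S p) Z →
      F (ptZ n m S Z) = 0 := by
    intro Z h h'
    rw [hFap, F_val0 n m l S hnested p hp1 hpm S' Z h', Finset.disjoint_iff_inter_eq_empty.mp h]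
    simp
  have inter_card : ∀ (Z : Finset (Fin n)) (k : ℕ), Disjoint (SS n m S k) Z →
      Z.card ≤ (S' ∩ Z).card + (n - (S' ∪ SS n m S k).card) := by
    intro Z k h
    have h3 : Z \ S' ⊆ (S' ∪ SS n m S k)ᶜ := by
      intro x hx
      simp only [mem_sdiff, mem_compl, mem_union, not_or] at hx ⊢
      exact ⟨hx.2, fun hc => Finset.disjoint_left.mp h hc hx.1⟩
    have h4 := card_le_card h3
    rw [card_compl, Fintype.card_fin] at h4
    have h5 := Finset.card_sdiff_add_card_inter Z S'
    rw [Finset.inter_comm] at h5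
    omega
  have faceB : ∀ (Z : Finset (Fin n)) (k : ℕ), p ≤ k → k ≤ m → Z.card = l →
      Lev n m S Z k → (S' ∪ SS n m S k)ᶜ ⊆ Z → F (ptZ n m S Z) = 0 := by
    intro Z k h1 h2 h3 h4 h5
    rw [hFap, F_val n m l S p hp1 hpm S' Z k h2 h1 h4]
    have h6 : (S' ∪ SS n m S k)ᶜ ⊆ Z \ S' := by
      intro x hx
      refine mem_sdiff.mpr ⟨h5 hx, ?_⟩
      simp only [mem_compl, mem_union, not_or] at hx
      exact hx.1
    have h7 := card_le_card h6
    rw [card_compl, Fintype.card_fin] at h7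
    have h8 := Finset.card_sdiff_add_card_inter Z S'
    rw [Finset.inter_comm] at h8
    have h9 := inter_card Z k ((h4 k h2).2 le_rfl)
    have h10 : (S' ∪ SS n m S k).card ≤ n := by
      simpa using card_le_univ (S' ∪ SS n m S k)
    have h11 : (S' ∪ SS n m S k).card + l = n + (S' ∩ Z).card := by omega
    have h12 : ((S' ∪ SS n m S k).card : ℝ) + l = n + (S' ∩ Z).card := by exact_mod_cast h11
    linarith
  -- existence of a face point of each level
  have exlev : ∀ k ≤ m, ∃ Z : Finset (Fin n), Z.card = l ∧ Lev n m S Z k ∧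
      F (ptZ n m S Z) = 0 := by
    intro k hk
    obtain ⟨x, hx1, hx2⟩ := step k hk
    by_cases hkp : k < p
    · have hxp : x ∈ SS n m S p := mono hkp hx1
      have hxS' : x ∉ S' := fun h => Finset.disjoint_left.mp hdis h hxp
      obtain ⟨Z, hZ1, hZ2, hZ3⟩ := Finset.exists_subsuperset_card_eq
        (s := {x}) (t := (S' ∪ SS n m S k)ᶜ) (n := l)
        (by simp [hx2, hxS']) (by simpa using hl1) (by
          rw [card_compl, Fintype.card_fin]
          have := card_le_card (Finset.union_subset_union_right (s := S')
            (mono (i := k) (j := p - 1) (by omega)))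
          omega)
      have hxZ : x ∈ Z := hZ1 (by simp)
      have hd : Disjoint (S' ∪ SS n m S k) Z :=
        (disjoint_compl_right).mono_right hZ2
      rw [Finset.disjoint_union_left] at hd
      refine ⟨Z, hZ3, lev_of n m S hnested Z k hd.2 ?_, faceA Z hd.1 ?_⟩
      · exact Finset.not_disjoint_iff.mpr ⟨x, hx1, hxZ⟩
      · exact Finset.not_disjoint_iff.mpr ⟨x, hxp, hxZ⟩
    · have hpk : p ≤ k := by omega
      obtain ⟨Z, hZ1, hZ2, hZ3⟩ := Finset.exists_subsuperset_card_eq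
        (s := insert x (S' ∪ SS n m S k)ᶜ) (t := (SS n m S k)ᶜ) (n := l)
        (by
          rw [Finset.insert_subset_iff]
          refine ⟨by simpa using hx2, ?_⟩
          exact Finset.compl_subset_compl.mpr Finset.subset_union_right)
        (by
          have h3 := card_insert_le x (S' ∪ SS n m S k)ᶜ
          rw [card_compl, Fintype.card_fin] at h3
          have := card_le_card (Finset.union_subset_union_right (s := S') (mono hpk))
          omega)
        (by
          rw [card_compl, Fintype.card_fin]
          have := card_le_card (mono hk)
          omega)
      have hxZ : x ∈ Z := hZ1 (by simp)
      have hd : Disjoint (SS n m S k) Z :=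
        (disjoint_compl_right).mono_right hZ2
      have hlev := lev_of n m S hnested Z k hd (Finset.not_disjoint_iff.mpr ⟨x, hx1, hxZ⟩)
      exact ⟨Z, hZ3, hlev, faceB Z k hpk hk hZ3 hlev
        ((Finset.subset_insert _ _).trans hZ1)⟩
  -- validity
  have hval : ∀ x ∈ Xset n m l u S, F x ≤ 0 := by
    intro x hx
    obtain ⟨Z, hZ1, hZ2, rfl⟩ := mem_pt n m l u S x hx
    obtain ⟨k, hk, hlev⟩ := exists_lev n m S hnested Z
    rw [hFap]
    by_cases hkp : p ≤ k
    · rw [F_val n m l S p hp1 hpm S' Z k hk hkp hlev]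
      have h9 := inter_card Z k ((hlev k hk).2 le_rfl)
      have h10 : (S' ∪ SS n m S k).card ≤ n := by
        simpa using card_le_univ (S' ∪ SS n m S k)
      have h11 : (S' ∪ SS n m S k).card + l ≤ n + (S' ∩ Z).card := by omega
      have h12 : ((S' ∪ SS n m S k).card : ℝ) + l ≤ n + (S' ∩ Z).card := by exact_mod_cast h11
      linarith
    · rw [F_val0 n m l S hnested p hp1 hpm S' Z (fun h => hkp ((hlev p hpm).1 h))]
      simp
  obtain ⟨s, hs1⟩ : (SS n m S 1).Nonempty := card_pos.mp (by omega)
  have hsp : s ∈ SS n m S p := mono hp1 hs1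
  -- a point off the face
  obtain ⟨Z0, hZ01, hZ02, hZ03⟩ := Finset.exists_subsuperset_card_eq
    (s := {s, j0}) (t := (univ : Finset (Fin n))) (n := l + 1) (Finset.subset_univ _)
    (card_le_two.trans (by omega)) (by rw [card_univ, Fintype.card_fin]; omega)
  obtain ⟨Z1, hZ11, hZ12, hZ13⟩ := exlev 0 (by omega)
  refine facet_crit _ F hval (ptZ n m S Z0) (pt_mem n m l u S Z0 (by omega) (by omega)) ?_
    (ptZ n m S Z1) (pt_mem n m l u S Z1 (by omega) (by omega)) hZ13 ?_
  · rw [hFap, F_val0 n m l S hnested p hp1 hpm S' Z0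
      (Finset.not_disjoint_iff.mpr ⟨s, hsp, hZ01 (by simp)⟩)]
    have : 0 < (S' ∩ Z0).card := card_pos.mpr ⟨j0, mem_inter.mpr ⟨hj0, hZ01 (by simp)⟩⟩
    have : (0:ℝ) < (S' ∩ Z0).card := by exact_mod_cast this
    linarith
  intro φ hφ
  have hFj : F (Pi.single j0 1, 0) = -1 := by
    rw [hFap]
    unfold mixGeLHS
    have : ∀ i, 1 ≤ i → dd m (0 : Fin m → ℝ) i = 0 := by
      intro i hi
      have : i ≠ 0 := by omega
      unfold dd; split_ifs <;> simp
    rw [this p hp1, Finset.sum_eq_zero]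
    · simp [hj0]
    · intro i hi
      rw [Finset.mem_Icc] at hi
      rw [this i (by omega), mul_zero]
  set G : ((Fin n → ℝ) × (Fin m → ℝ)) →ₗ[ℝ] ℝ := φ + (φ (Pi.single j0 1, 0)) • F with hGdef
  have hGj0 : G (Pi.single j0 1, 0) = 0 := by
    simp [hGdef, hFj]
  have hG : ∀ Z Z' : Finset (Fin n), l ≤ Z.card → Z.card ≤ u → l ≤ Z'.card → Z'.card ≤ u →
      F (ptZ n m S Z) = 0 → F (ptZ n m S Z') = 0 → G (ptZ n m S Z - ptZ n m S Z') = 0 := by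
    intro Z Z' a b c d e f
    rw [map_sub, hGdef]
    simp only [LinearMap.add_apply, LinearMap.smul_apply, e, f]
    rw [hφ _ (pt_mem n m l u S Z a b) _ (pt_mem n m l u S Z' c d) e f]
    ring
  -- coefficients off S'
  have hcoefT : ∀ j, j ∉ S' → G (Pi.single j 1, 0) = 0 := by
    intro j hj
    obtain ⟨t, ht1, htj⟩ : ∃ t ∈ SS n m S 1, t ≠ j :=
      Finset.exists_mem_ne (by omega) j
    have htp : t ∈ SS n m S p := mono hp1 ht1
    have htS' : t ∉ S' := fun h => Finset.disjoint_left.mp hdis h htp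
    obtain ⟨Z, hZ1, hZ2, hZ3⟩ := Finset.exists_subsuperset_card_eq
      (s := {t}) (t := (insert j S')ᶜ) (n := l)
      (by simp [htj, htS']) (by simpa using hl1) (by
        rw [card_compl, Fintype.card_fin, card_insert_of_notMem hj]
        omega)
    have htZ : t ∈ Z := hZ1 (by simp)
    have hjZ : j ∉ Z := fun h => by simpa using hZ2 h
    have hdZ : Disjoint S' Z := by
      rw [Finset.disjoint_right]
      intro a ha
      have := hZ2 ha
      simp only [mem_compl, mem_insert, not_or] at this
      exact this.2
    have hdZ' : Disjoint S' (insert j Z) := by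
      rw [Finset.disjoint_insert_right]; exact ⟨hj, hdZ⟩
    have hc := card_insert_of_notMem hjZ
    have h0 := hG (insert j Z) Z (by omega) (by omega) (by omega) (by omega)
      (faceA _ hdZ' (Finset.not_disjoint_iff.mpr ⟨t, htp, by simp [htZ]⟩))
      (faceA _ hdZ (Finset.not_disjoint_iff.mpr ⟨t, htp, htZ⟩))
    have heq : ptZ n m S (insert j Z) - ptZ n m S Z = (Pi.single j 1, 0) := by
      refine Prod.ext ?_ ?_
      · funext a
        by_cases haj : a = j
        · subst haj; simp [ptZ, hjZ]
        · simp [ptZ, haj]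
      · funext i
        have htSi : t ∈ S i := by
          rw [← SS_fin n m S i]; exact mono (by omega) ht1
        have e1 : ¬ Disjoint (S i) Z := Finset.not_disjoint_iff.mpr ⟨t, htSi, htZ⟩
        have e2 : ¬ Disjoint (S i) (insert j Z) :=
          Finset.not_disjoint_iff.mpr ⟨t, htSi, by simp [htZ]⟩
        simp only [ptZ, Prod.snd_sub, Pi.sub_apply, if_neg e1, if_neg e2]
        simp
    rwa [heq] at h0
  -- coefficients on S'
  have hcoefS : ∀ j ∈ S', G (Pi.single j 1, 0) = 0 := by
    intro j hj
    by_cases hjj : j = j0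
    · rw [hjj]; exact hGj0
    have hjp : j ∉ SS n m S p := Finset.disjoint_left.mp hdis hj
    have hj0p : j0 ∉ SS n m S p := Finset.disjoint_left.mp hdis hj0
    obtain ⟨V, hV1, hV2, hV3⟩ := Finset.exists_subsuperset_card_eq
      (s := (S' ∪ SS n m S p)ᶜ) (t := (insert j (insert j0 (SS n m S p)))ᶜ) (n := l - 1)
      (by
        apply Finset.compl_subset_compl.mpr
        intro a ha
        simp only [mem_insert, mem_union] at ha ⊢
        rcases ha with rfl | rfl | h
        · exact Or.inl hj
        · exact Or.inl hj0
        · exact Or.inr h)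
      (by rw [card_compl, Fintype.card_fin]; omega)
      (by
        rw [card_compl, Fintype.card_fin, card_insert_of_notMem (by simp [hjj, hjp]),
          card_insert_of_notMem hj0p]
        omega)
    have hjV : j ∉ V := fun h => by simpa using hV2 h
    have hj0V : j0 ∉ V := fun h => by simpa using hV2 h
    have hdV : Disjoint (SS n m S p) V := by
      rw [Finset.disjoint_right]
      intro a ha
      have := hV2 ha
      simp only [mem_compl, mem_insert, not_or] at this
      exact this.2.2
    have key : ∀ x ∈ S', x ∉ V → (insert x V).card = l ∧ Lev n m S (insert x V) p ∧
        F (ptZ n m S (insert x V)) = 0 := by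
      intro x hx hxV
      have hc : (insert x V).card = l := by rw [card_insert_of_notMem hxV]; omega
      have hlev : Lev n m S (insert x V) p := by
        apply lev_of n m S hnested
        · rw [Finset.disjoint_insert_right]
          exact ⟨Finset.disjoint_left.mp hdis hx, hdV⟩
        · rw [Finset.not_disjoint_iff]
          rcases hpm.eq_or_lt with h | h
          · refine ⟨x, ?_, by simp⟩
            simp [SS, h]
          · obtain ⟨y, hy1, hy2⟩ := Finset.not_subset.mp (hL3 h)
            rw [mem_sdiff] at hy1
            refine ⟨y, hy1.1, Finset.mem_insert_of_mem (hV1 ?_)⟩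
            simp [hy1.2, hy2]
      exact ⟨hc, hlev, faceB _ p le_rfl hpm hc hlev (hV1.trans (Finset.subset_insert _ _))⟩
    obtain ⟨a1, a2, a3⟩ := key j hj hjV
    obtain ⟨b1, b2, b3⟩ := key j0 hj0 hj0V
    have h0 := hG _ _ (by omega) (by omega) (by omega) (by omega) a3 b3
    have heq : ptZ n m S (insert j V) - ptZ n m S (insert j0 V) =
        (Pi.single j 1, 0) - (Pi.single j0 1, 0) := by
      refine Prod.ext ?_ ?_
      · funext a
        by_cases haj : a = j
        · subst haj; simp [ptZ, hjV, hjj]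
        · by_cases haj0 : a = j0
          · subst haj0; simp [ptZ, hj0V, haj]
          · simp [ptZ, haj, haj0]
      · funext i
        rw [Prod.snd_sub, Pi.sub_apply, snd_lev n m S _ p a2, snd_lev n m S _ p b2]
        simp
    rw [heq, map_sub, hGj0, sub_zero] at h0
    exact h0
  have hcoef : ∀ j, G (Pi.single j 1, 0) = 0 := by
    intro j
    by_cases h : j ∈ S'
    · exact hcoefS j h
    · exact hcoefT j h
  have hfst : ∀ z : Fin n → ℝ, G (z, 0) = 0 := by
    have : G ∘ₗ LinearMap.inl ℝ (Fin n → ℝ) (Fin m → ℝ) = 0 := by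
      apply LinearMap.pi_ext'
      intro j
      ext
      simpa using hcoef j
    intro z
    exact LinearMap.congr_fun this z
  have hcoefd : ∀ i : Fin m, G (0, Pi.single i 1) = 0 := by
    intro i
    obtain ⟨Z, a1, a2, a3⟩ := exlev (i + 1) i.2
    obtain ⟨Z', b1, b2, b3⟩ := exlev i i.2.le
    have h0 := hG _ _ (by omega) (by omega) (by omega) (by omega) a3 b3
    have heq : ptZ n m S Z - ptZ n m S Z' =
        ((ptZ n m S Z - ptZ n m S Z').1, 0) + (0, Pi.single i 1) := by
      refine Prod.ext (by simp) ?_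
      funext i'
      simp only [Prod.snd_sub, Prod.snd_add, Pi.sub_apply, zero_add]
      rw [snd_lev n m S _ _ a2, snd_lev n m S _ _ b2]
      by_cases h : i' = i
      · subst h; simp
      · have : (i' : ℕ) ≠ i := fun hc => h (Fin.ext hc)
        rw [Pi.single_eq_of_ne h]
        by_cases h' : (i' : ℕ) + 1 ≤ i
        · rw [if_pos h', if_pos (by omega), sub_self]
        · rw [if_neg h', if_neg (by omega), sub_self]
    rw [heq, map_add, hfst, zero_add] at h0
    exact h0
  have hsnd : ∀ z : Fin m → ℝ, G (0, z) = 0 := by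
    have : G ∘ₗ LinearMap.inr ℝ (Fin n → ℝ) (Fin m → ℝ) = 0 := by
      apply LinearMap.pi_ext'
      intro j
      ext
      simpa using hcoefd j
    intro z
    exact LinearMap.congr_fun this z
  have hG0 : G = 0 := by
    apply LinearMap.ext
    intro x
    have : x = (x.1, 0) + (0, x.2) := by simp
    rw [this, map_add, hfst, hsnd]; simp
  refine ⟨-φ (Pi.single j0 1, 0), ?_⟩
  apply LinearMap.ext
  intro x
  have := LinearMap.congr_fun hG0 x
  simp only [hGdef, LinearMap.add_apply, LinearMap.smul_apply, smul_eq_mul,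
    LinearMap.zero_apply] at this
  rw [LinearMap.smul_apply, smul_eq_mul]
  linarith
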